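/- Let v > 0, δ₂ ≥ 0 and t_s be real numbers with 0 ≤ t_s ≤ 2. Set Δ = 1 + 1/(4·v), T = t_s·Δ, and w = (v²/2)·(2·T − t_s)/(v·T + δ₂ + 1). Then 0 ≤ w and 2·w < v; i.e., the chosen wall speed is nonnegative and the ball's speed v − 2·w between the two moving walls remains positive. -/

import Mathlib

/-- With the choice `t₁(t_s) = t_s·(1 + 1/(4v))`, the resulting wall speed `w`
is nonnegative and satisfies `2·w < v`, so the ball's speed `v − 2·w` between
the two moving walls remains positive. -/
theorem moving_wall_speed_bounds (v δ₂ t_s : ℝ)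
    (hv : 0 < v) (hδ₂ : 0 ≤ δ₂) (hts0 : 0 ≤ t_s) (hts2 : t_s ≤ 2) :
    let Δ : ℝ := 1 + 1 / (4 * v)
    let T : ℝ := t_s * Δ
    let w : ℝ := (v ^ 2 / 2) * (2 * T - t_s) / (v * T + δ₂ + 1)
    0 ≤ w ∧ 2 * w < v := by
  intro Δ T w
  have hT : v * T = t_s * (v + 1 / 4) := by
    simp only [T, Δ]
    field_simp
  have hden : 0 < t_s * (v + 1 / 4) + δ₂ + 1 := by positivity
  have hw : w = v / 2 * (t_s * (v + 1 / 2)) / (t_s * (v + 1 / 4) + δ₂ + 1) := by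
    simp only [w]
    rw [hT]
    congr 1
    linear_combination v * hT
  rw [hw]
  refine ⟨by positivity, ?_⟩
  -- After cancelling `v`, the bound is `t_s / 4 < δ₂ + 1`, which follows from `t_s ≤ 2`.
  have key : t_s * (v + 1 / 2) < t_s * (v + 1 / 4) + δ₂ + 1 := by linarith
  rw [← mul_div_assoc, div_lt_iff₀ hden]
  linarith [mul_lt_mul_of_pos_left key hv]
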